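/- (SLLN for the RWG in the degenerate case p = 0.) Suppose p = 0. Then almost surely S_n/n converges to μ + ρ as n → ∞, and moreover almost surely ‖S_n/n − μ − ρ‖² = O((log n)/n). -/

import Mathlib

open MeasureTheory ProbabilityTheory Real Filter Set
open scoped BigOperators NNReal

noncomputable section

namespace RWG

abbrev E : Type := EuclideanSpace ℝ (Fin 3)

def vec (x y z : ℝ) : E := (EuclideanSpace.equiv (Fin 3) ℝ).symm ![x, y, z]

/-- The four families of vertices of the `2h` graphite lattice. -/
def V (a h : ℝ) (i j : Fin 2) : Set E :=
  {v | ∃ k l n : ℤ, v =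
    vec (a * ((-1 : ℝ) ^ ((i : ℕ) + 1) * (if j = 1 then (1 : ℝ) else 0) + (3 / 2) * k))
        (a * ((Real.sqrt 3 / 2) * k + Real.sqrt 3 * l))
        (h * (2 * n + (if i ≠ j then (1 : ℝ) else 0)))}

/-- Horizontal jump from a vertex of horizontal type `i` in direction `k`. -/
def w (a : ℝ) (i : Fin 2) (k : Fin 3) : E :=
  vec (a * Real.cos (2 * (k : ℕ) * π / 3 + (i : ℕ) * π))
      (a * Real.sin (2 * (k : ℕ) * π / 3 + (i : ℕ) * π)) 0

/-- `S` is a random walk on graphite with parameters `a, h, p, α, q` and natural filtration `F`. -/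
structure IsRWG {Ω : Type} [MeasurableSpace Ω] (P : Measure Ω)
    (a h p α : ℝ) (q : Fin 2 → Fin 2 → Fin 3 → ℝ)
    (S : ℕ → Ω → E) (F : ℕ → MeasurableSpace Ω) : Prop where
  prob : IsProbabilityMeasure P
  ha : 0 < a
  hh : 0 < h
  hp0 : 0 ≤ p
  hp1 : p ≤ 1
  hα0 : 0 < α
  hα1 : α < 1
  hq : ∀ i j k, 0 ≤ q i j k
  hqsum0 : ∀ i, q i 0 0 + q i 0 1 + q i 0 2 = 1 - p
  hqsum1 : ∀ i, q i 1 0 + q i 1 1 + q i 1 2 = 1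
  hS0 : ∀ ω, S 0 ω = 0
  hSmeas : ∀ n, Measurable (S n)
  hF : ∀ n, F n =
    MeasurableSpace.comap (fun ω (k : Fin n) => S ((k : ℕ) + 1) ω - S (k : ℕ) ω)
      MeasurableSpace.pi
  hTrans : ∀ (n : ℕ) (f : E → ℝ), Measurable f → (∃ C, ∀ x, |f x| ≤ C) →
    P[fun ω => f (S (n + 1) ω)|F n] =ᵐ[P]
      fun ω => ∑ i : Fin 2,
        ((V a h i 0).indicator (fun _ => (1 : ℝ)) (S n ω) *
          (α * p * f (S n ω + vec 0 0 h) + (1 - α) * p * f (S n ω + vec 0 0 (-h)) +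
            ∑ k : Fin 3, q i 0 k * f (S n ω + w a i k)) +
        (V a h i 1).indicator (fun _ => (1 : ℝ)) (S n ω) *
          ∑ k : Fin 3, q i 1 k * f (S n ω + w a i k))

def uu (q : Fin 2 → Fin 2 → Fin 3 → ℝ) (i j : Fin 2) : ℝ := q i j 1 + q i j 2

def vv (q : Fin 2 → Fin 2 → Fin 3 → ℝ) (i j : Fin 2) : ℝ := q i j 1 - q i j 2

def ss (q : Fin 2 → Fin 2 → Fin 3 → ℝ) (i j : Fin 2) : ℝ := uu q i j * (1 - uu q i j)

def tt (q : Fin 2 → Fin 2 → Fin 3 → ℝ) (i j : Fin 2) : ℝ := vv q i j * (uu q i j - 1)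

/-- The vector `μ` of the RWG. -/
def muG (a h p α : ℝ) (q : Fin 2 → Fin 2 → Fin 3 → ℝ) : E :=
  vec (3 * a / 8 * (-(uu q 0 0 + uu q 0 1) + (uu q 1 0 + uu q 1 1)))
      (a * Real.sqrt 3 / 8 * ((vv q 0 0 + vv q 0 1) - (vv q 1 0 + vv q 1 1)))
      (h * p / 2 * (2 * α - 1))

/-- The vector `m` of the RWG. -/
def mG (a h p α : ℝ) (q : Fin 2 → Fin 2 → Fin 3 → ℝ) : E :=
  vec (3 * a / 8 * (-(uu q 0 0 - uu q 0 1) + (uu q 1 0 - uu q 1 1)))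
      (a * Real.sqrt 3 / 8 * ((vv q 0 0 - vv q 0 1) - (vv q 1 0 - vv q 1 1)))
      (h * p / 2 * (2 * α - 1))

/-- The vector `θ` of the RWG. -/
def thetaG (a p : ℝ) (q : Fin 2 → Fin 2 → Fin 3 → ℝ) : E :=
  vec (a * ((1 - p / 2) - 3 / 8 * ((uu q 0 0 + uu q 0 1) + (uu q 1 0 + uu q 1 1))))
      (a * Real.sqrt 3 / 8 * ((vv q 0 0 + vv q 0 1) + (vv q 1 0 + vv q 1 1))) 0

/-- The vector `ρ` of the RWG. -/
def rhoG (a p : ℝ) (q : Fin 2 → Fin 2 → Fin 3 → ℝ) : E :=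
  vec (a * (-(p / 2) - 3 / 8 * ((uu q 0 0 - uu q 0 1) + (uu q 1 0 - uu q 1 1))))
      (a * Real.sqrt 3 / 8 * ((vv q 0 0 - vv q 0 1) + (vv q 1 0 - vv q 1 1))) 0

/-- The vector `ζ = (0, 0, hp(2α−1))`. -/
def zetaG (h p α : ℝ) : E := vec 0 0 (h * p * (2 * α - 1))

/-- The indicator process `i_n`. -/
def iP {Ω : Type} (a h : ℝ) (S : ℕ → Ω → E) (n : ℕ) (ω : Ω) : ℝ :=
  (V a h 0 0 ∪ V a h 0 1).indicator (fun _ => (1 : ℝ)) (S n ω) -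
    (V a h 1 0 ∪ V a h 1 1).indicator (fun _ => (1 : ℝ)) (S n ω)

/-- The indicator process `j_n`. -/
def jP {Ω : Type} (a h : ℝ) (S : ℕ → Ω → E) (n : ℕ) (ω : Ω) : ℝ :=
  (V a h 0 0 ∪ V a h 1 0).indicator (fun _ => (1 : ℝ)) (S n ω) -
    (V a h 0 1 ∪ V a h 1 1).indicator (fun _ => (1 : ℝ)) (S n ω)

/-- The indicator process `k_n`. -/
def kP {Ω : Type} (a h : ℝ) (S : ℕ → Ω → E) (n : ℕ) (ω : Ω) : ℝ :=
  (V a h 0 0 ∪ V a h 1 1).indicator (fun _ => (1 : ℝ)) (S n ω) -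
    (V a h 0 1 ∪ V a h 1 0).indicator (fun _ => (1 : ℝ)) (S n ω)

/-- The matrix `σ²` of the RWG. -/
def sigmaG (a h p α : ℝ) (q : Fin 2 → Fin 2 → Fin 3 → ℝ) : Matrix (Fin 3) (Fin 3) ℝ :=
  !![a ^ 2 / 4 * (2 * p * (1 - p) + 9 / 4 * (ss q 0 0 + ss q 1 0 + ss q 0 1 + ss q 1 1)
        - 3 * p * (uu q 0 0 + uu q 1 0)),
     a ^ 2 * Real.sqrt 3 / 16 * (3 * (tt q 0 0 + tt q 1 0 + tt q 0 1 + tt q 1 1)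
        + 2 * p * (vv q 0 0 + vv q 1 0)),
     a * h / 8 * (-4 * p * (1 - p) * (2 * α - 1)
        + 3 * p * (2 * α - 1) * (uu q 0 0 + uu q 1 0));
     a ^ 2 * Real.sqrt 3 / 16 * (3 * (tt q 0 0 + tt q 1 0 + tt q 0 1 + tt q 1 1)
        + 2 * p * (vv q 0 0 + vv q 1 0)),
     3 * a ^ 2 / 16 * ((uu q 0 0 + uu q 1 0 + uu q 0 1 + uu q 1 1)
        - ((vv q 0 0) ^ 2 + (vv q 1 0) ^ 2 + (vv q 0 1) ^ 2 + (vv q 1 1) ^ 2)),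
     -(a * h * Real.sqrt 3 / 8) * (p * (2 * α - 1) * (vv q 0 0 + vv q 1 0));
     a * h / 8 * (-4 * p * (1 - p) * (2 * α - 1)
        + 3 * p * (2 * α - 1) * (uu q 0 0 + uu q 1 0)),
     -(a * h * Real.sqrt 3 / 8) * (p * (2 * α - 1) * (vv q 0 0 + vv q 1 0)),
     h ^ 2 * p / 2 * (1 - p * (2 * α - 1) ^ 2)]

/-- The matrix `γ` of the RWG. -/
def gammaG (a h p α : ℝ) (q : Fin 2 → Fin 2 → Fin 3 → ℝ) : Matrix (Fin 3) (Fin 3) ℝ :=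
  !![a ^ 2 / 4 * (2 * p * (1 - p) + 9 / 4 * (ss q 0 0 + ss q 1 0 - ss q 0 1 - ss q 1 1)
        - 3 * p * (uu q 0 0 + uu q 1 0)),
     a ^ 2 * Real.sqrt 3 / 16 * (3 * (tt q 0 0 + tt q 1 0 - tt q 0 1 - tt q 1 1)
        + 2 * p * (vv q 0 0 + vv q 1 0)),
     a * h / 8 * (-4 * p * (1 - p) * (2 * α - 1)
        + 3 * p * (2 * α - 1) * (uu q 0 0 + uu q 1 0));
     a ^ 2 * Real.sqrt 3 / 16 * (3 * (tt q 0 0 + tt q 1 0 - tt q 0 1 - tt q 1 1)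
        + 2 * p * (vv q 0 0 + vv q 1 0)),
     3 * a ^ 2 / 16 * ((uu q 0 0 + uu q 1 0 - uu q 0 1 - uu q 1 1)
        - ((vv q 0 0) ^ 2 + (vv q 1 0) ^ 2 - (vv q 0 1) ^ 2 - (vv q 1 1) ^ 2)),
     -(a * h * Real.sqrt 3 / 8) * (p * (2 * α - 1) * (vv q 0 0 + vv q 1 0));
     a * h / 8 * (-4 * p * (1 - p) * (2 * α - 1)
        + 3 * p * (2 * α - 1) * (uu q 0 0 + uu q 1 0)),
     -(a * h * Real.sqrt 3 / 8) * (p * (2 * α - 1) * (vv q 0 0 + vv q 1 0)),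
     h ^ 2 * p / 2 * (1 - p * (2 * α - 1) ^ 2)]

/-- The matrix `δ` of the RWG. -/
def deltaG (a h p α : ℝ) (q : Fin 2 → Fin 2 → Fin 3 → ℝ) : Matrix (Fin 3) (Fin 3) ℝ :=
  !![a ^ 2 / 4 * (9 / 4 * (ss q 0 0 - ss q 1 0 - ss q 0 1 + ss q 1 1)
        - 3 * p * (uu q 0 0 - uu q 1 0)),
     a ^ 2 * Real.sqrt 3 / 16 * (3 * (tt q 0 0 - tt q 1 0 - tt q 0 1 + tt q 1 1)
        + 2 * p * (vv q 0 0 - vv q 1 0)),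
     a * h / 8 * (3 * p * (2 * α - 1) * (uu q 0 0 - uu q 1 0));
     a ^ 2 * Real.sqrt 3 / 16 * (3 * (tt q 0 0 - tt q 1 0 - tt q 0 1 + tt q 1 1)
        + 2 * p * (vv q 0 0 - vv q 1 0)),
     3 * a ^ 2 / 16 * ((uu q 0 0 - uu q 1 0 - uu q 0 1 + uu q 1 1)
        - ((vv q 0 0) ^ 2 - (vv q 1 0) ^ 2 - (vv q 0 1) ^ 2 + (vv q 1 1) ^ 2)),
     -(a * h * Real.sqrt 3 / 8) * (p * (2 * α - 1) * (vv q 0 0 - vv q 1 0));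
     a * h / 8 * (3 * p * (2 * α - 1) * (uu q 0 0 - uu q 1 0)),
     -(a * h * Real.sqrt 3 / 8) * (p * (2 * α - 1) * (vv q 0 0 - vv q 1 0)),
     0]

/-- A probability measure on `ℝ³` is the centered Gaussian law with covariance matrix `Γ`
if every linear functional pushes it to the corresponding one-dimensional Gaussian law. -/
def IsCenteredGaussian (G : Measure E) (Γ : Matrix (Fin 3) (Fin 3) ℝ) : Prop :=
  IsProbabilityMeasure G ∧
    ∀ u : Fin 3 → ℝ, G.map (fun x => ∑ r, u r * x r) =
      gaussianReal 0 (Real.toNNReal (∑ r, ∑ c, u r * Γ r c * u c))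

/-- View a point of `ℝ³` as a plain function on indices. -/
def toFun (x : E) : Fin 3 → ℝ := x

end RWG

namespace RWG

lemma cos_two_pi_div_three : Real.cos (2 * π / 3) = -(1 / 2) := by
  rw [show 2 * π / 3 = π - π / 3 by ring, Real.cos_pi_sub, Real.cos_pi_div_three]

lemma sin_two_pi_div_three : Real.sin (2 * π / 3) = √3 / 2 := by
  rw [show 2 * π / 3 = π - π / 3 by ring, Real.sin_pi_sub, Real.sin_pi_div_three]

lemma cos_four_pi_div_three : Real.cos (2 * 2 * π / 3) = -(1 / 2) := by
  rw [show 2 * 2 * π / 3 = π / 3 + π by ring, Real.cos_add_pi, Real.cos_pi_div_three]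

lemma sin_four_pi_div_three : Real.sin (2 * 2 * π / 3) = -(√3 / 2) := by
  rw [show 2 * 2 * π / 3 = π / 3 + π by ring, Real.sin_add_pi, Real.sin_pi_div_three]

lemma w_eq (a : ℝ) (i : Fin 2) :
    w a i 0 = (-1 : ℝ) ^ (i : ℕ) • vec a 0 0 ∧
    w a i 1 = (-1 : ℝ) ^ (i : ℕ) • vec (-(a / 2)) (a * √3 / 2) 0 ∧
    w a i 2 = (-1 : ℝ) ^ (i : ℕ) • vec (-(a / 2)) (-(a * √3 / 2)) 0 := by
  refine ⟨?_, ?_, ?_⟩ <;> ext r <;> fin_cases i <;> fin_cases r <;>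
    simp [w, vec, cos_two_pi_div_three, sin_two_pi_div_three,
      cos_four_pi_div_three, sin_four_pi_div_three] <;> ring

lemma abs_w_le {a : ℝ} (ha : 0 < a) (i : Fin 2) (k r : Fin 3) : |w a i k r| ≤ a := by
  have hc (x : ℝ) : |a * Real.cos x| ≤ a := by
    rw [abs_mul, abs_of_pos ha]
    exact mul_le_of_le_one_right ha.le (Real.abs_cos_le_one x)
  have hs (x : ℝ) : |a * Real.sin x| ≤ a := by
    rw [abs_mul, abs_of_pos ha]
    exact mul_le_of_le_one_right ha.le (Real.abs_sin_le_one x)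
  fin_cases r
  · exact hc _
  · exact hs _
  · simpa [w, vec] using ha.le

/-- With `p = 0` the walk alternates between `V 0 0` and `V 1 1`. -/
lemma add_w_mem_V {a h : ℝ} {i : Fin 2} {x : E} (hx : x ∈ V a h i i) (k : Fin 3) :
    x + w a i k ∈ V a h (i + 1) (i + 1) := by
  obtain ⟨m, l, n, rfl⟩ := hx
  obtain ⟨h0, h1, h2⟩ := w_eq a i
  fin_cases i <;> fin_cases k
  · refine ⟨m, l, n, ?_⟩
    simp only [Fin.zero_eta] at h0 ⊢
    rw [h0]; ext r; fin_cases r <;> simp [vec]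
    ring
  · refine ⟨m - 1, l + 1, n, ?_⟩
    simp only [Fin.zero_eta, Fin.mk_one] at h1 ⊢
    rw [h1]; ext r; fin_cases r <;> simp [vec] <;> ring
  · refine ⟨m - 1, l, n, ?_⟩
    simp only [Fin.zero_eta, Fin.reduceFinMk] at h2 ⊢
    rw [h2]; ext r; fin_cases r <;> simp [vec] <;> ring
  · refine ⟨m, l, n, ?_⟩
    simp only [Fin.zero_eta, Fin.mk_one] at h0 ⊢
    rw [h0]; ext r; fin_cases r <;> simp [vec]
    ring
  · refine ⟨m + 1, l - 1, n, ?_⟩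
    simp only [Fin.mk_one] at h1 ⊢
    rw [h1]; ext r; fin_cases r <;> simp [vec] <;> ring
  · refine ⟨m + 1, l, n, ?_⟩
    simp only [Fin.mk_one, Fin.reduceFinMk] at h2 ⊢
    rw [h2]; ext r; fin_cases r <;> simp [vec] <;> ring

lemma not_mem_V_of_ne {a h : ℝ} (hh : 0 < h) {i i' j' : Fin 2} {x : E}
    (hx : x ∈ V a h i i) (hne : i' ≠ j') : x ∉ V a h i' j' := by
  rintro ⟨m', l', n', h'⟩
  obtain ⟨m, l, n, rfl⟩ := hx
  have h2 := congrArg (fun v : E => v 2) h'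
  simp [vec, hne, hh.ne'] at h2
  norm_cast at h2
  omega

lemma not_mem_V_diag_of_ne {a h : ℝ} (ha : 0 < a) {i i' : Fin 2} {x : E}
    (hx : x ∈ V a h i i) (hne : i' ≠ i) : x ∉ V a h i' i' := by
  rintro ⟨m', l', n', h'⟩
  obtain ⟨m, l, n, rfl⟩ := hx
  have h2 := congrArg (fun v : E => v 0) h'
  simp only [vec] at h2
  fin_cases i <;> fin_cases i' <;> simp [ha.ne'] at h2 hne
  · have h3 : ((3 * m : ℤ) : ℝ) = ((2 + 3 * m' : ℤ) : ℝ) := by push_cast; linarith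
    norm_cast at h3
    omega
  · have h3 : ((3 * m' : ℤ) : ℝ) = ((2 + 3 * m : ℤ) : ℝ) := by push_cast; linarith
    norm_cast at h3
    omega

/-- The index `i` such that the walk with `p = 0` is in `V i i` at time `n`. -/
def parity : ℕ → Fin 2
  | 0 => 0
  | n + 1 => parity n + 1

lemma parity_add_self (m : ℕ) : parity (m + m) = 0 := by
  induction m with
  | zero => rfl
  | succ m ih =>
    rw [show m + 1 + (m + 1) = m + m + 1 + 1 by ring, parity, parity, ih]
    rfl

/-- Mean of a horizontal jump out of `V i i` when `p = 0`. -/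
def meanStep (a : ℝ) (q : Fin 2 → Fin 2 → Fin 3 → ℝ) (i : Fin 2) : E :=
  ∑ k, q i i k • w a i k

lemma meanStep_add_meanStep (a h α : ℝ) {q : Fin 2 → Fin 2 → Fin 3 → ℝ}
    (hq : ∀ i, ∑ k, q i i k = 1) :
    meanStep a q 0 + meanStep a q 1 = (2 : ℝ) • (muG a h 0 α q + rhoG a 0 q) := by
  have hq0 := hq 0
  have hq1 := hq 1
  obtain ⟨h0, h1, h2⟩ := w_eq a 0
  obtain ⟨h0', h1', h2'⟩ := w_eq a 1
  rw [Fin.sum_univ_three] at hq0 hq1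
  simp only [meanStep, Fin.sum_univ_three, h0, h1, h2, h0', h1', h2']
  ext r
  fin_cases r <;> simp [vec, muG, rhoG, uu, vv]
  · linear_combination a * hq0 - a * hq1
  · ring

lemma abs_sum_mul_le {q y : Fin 3 → ℝ} {B : ℝ} (hq : ∀ k, 0 ≤ q k) (hsum : ∑ k, q k = 1)
    (hy : ∀ k, |y k| ≤ B) : |∑ k, q k * y k| ≤ B := calc
  |∑ k, q k * y k| ≤ ∑ k, |q k * y k| := Finset.abs_sum_le_sum_abs _ _
  _ ≤ ∑ k, q k * B := Finset.sum_le_sum fun k _ => by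
      rw [abs_mul, abs_of_nonneg (hq k)]; exact mul_le_mul_of_nonneg_left (hy k) (hq k)
  _ = B := by rw [← Finset.sum_mul, hsum, one_mul]

/-- Hoeffding's lemma for a finitely supported centred law. -/
lemma sum_mul_exp_le {q y : Fin 3 → ℝ} {B : ℝ} (hB : 0 < B) (hq : ∀ k, 0 ≤ q k)
    (hsum : ∑ k, q k = 1) (hmean : ∑ k, q k * y k = 0) (hy : ∀ k, |y k| ≤ B) (t : ℝ) :
    ∑ k, q k * Real.exp (t * y k) ≤ Real.exp (t ^ 2 * B ^ 2 / 2) := calc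
  ∑ k, q k * Real.exp (t * y k)
      ≤ ∑ k, q k * (Real.cosh (t * B) + y k / B * Real.sinh (t * B)) := by
        refine Finset.sum_le_sum fun k _ => mul_le_mul_of_nonneg_left ?_ (hq k)
        have h1 : |y k / B| ≤ 1 := by
          rw [abs_div, abs_of_pos hB]; exact (div_le_one hB).2 (hy k)
        have h2 := Real.exp_mul_le_cosh_add_mul_sinh h1 (t * B)
        rwa [show y k / B * (t * B) = t * y k by field_simp] at h2
  _ = (∑ k, q k) * Real.cosh (t * B) + (∑ k, q k * y k) * (Real.sinh (t * B) / B) := by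
        rw [Finset.sum_mul, Finset.sum_mul, ← Finset.sum_add_distrib]
        exact Finset.sum_congr rfl fun k _ => by ring
  _ = Real.cosh (t * B) := by rw [hsum, hmean]; ring
  _ ≤ Real.exp ((t * B) ^ 2 / 2) := Real.cosh_le_exp_half_sq _
  _ = Real.exp (t ^ 2 * B ^ 2 / 2) := by rw [mul_pow]

lemma measurableSet_V (a h : ℝ) (i j : Fin 2) : MeasurableSet (V a h i j) := by
  refine Set.Countable.measurableSet ((Set.countable_range fun m : ℤ × ℤ × ℤ =>
    vec (a * ((-1 : ℝ) ^ ((i : ℕ) + 1) * (if j = 1 then (1 : ℝ) else 0) + (3 / 2) * m.1))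
        (a * ((Real.sqrt 3 / 2) * m.1 + Real.sqrt 3 * m.2.1))
        (h * (2 * m.2.2 + (if i ≠ j then (1 : ℝ) else 0)))).mono ?_)
  rintro _ ⟨k, l, n, rfl⟩
  exact ⟨(k, l, n), rfl⟩

section Walk

variable {Ω : Type} [MeasurableSpace Ω] {P : Measure Ω} {a h α : ℝ}
  {q : Fin 2 → Fin 2 → Fin 3 → ℝ} {S : ℕ → Ω → E} {F : ℕ → MeasurableSpace Ω}

lemma IsRWG.sum_q (hRW : IsRWG P a h 0 α q S F) (i : Fin 2) : ∑ k, q i i k = 1 := by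
  rw [Fin.sum_univ_three]
  fin_cases i
  · simpa using hRW.hqsum0 0
  · exact hRW.hqsum1 1

lemma IsRWG.F_le (hRW : IsRWG P a h 0 α q S F) (n : ℕ) :
    F n ≤ (inferInstance : MeasurableSpace Ω) := by
  rw [hRW.hF n]
  exact (measurable_pi_lambda _ fun k =>
    (hRW.hSmeas _).sub (hRW.hSmeas _)).comap_le

lemma IsRWG.integral_succ (hRW : IsRWG P a h 0 α q S F) {n : ℕ} {i : Fin 2}
    (hV : ∀ᵐ ω ∂P, S n ω ∈ V a h i i) {f : E → ℝ} (hf : Measurable f) (hb : ∃ C, ∀ x, |f x| ≤ C) :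
    ∫ ω, f (S (n + 1) ω) ∂P = ∑ k, q i i k * ∫ ω, f (S n ω + w a i k) ∂P := by
  have := hRW.prob
  have hint (k : Fin 3) : Integrable (fun ω => q i i k * f (S n ω + w a i k)) P := by
    obtain ⟨C, hC⟩ := hb
    refine (Integrable.of_bound (C := C) ?_ (ae_of_all _ fun ω => ?_)).const_mul _
    · exact (hf.comp ((hRW.hSmeas n).add_const _)).aestronglyMeasurable
    · simpa using hC _
  rw [← integral_condExp (hRW.F_le n), integral_congr_ae (hRW.hTrans n f hf hb)]
  simp_rw [← integral_const_mul]
  rw [← integral_finsetSum _ fun k _ => hint k]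
  refine integral_congr_ae ?_
  filter_upwards [hV] with ω hω
  have hoff (i' j' : Fin 2) (hne : i' ≠ j') := not_mem_V_of_ne hRW.hh hω hne
  have hdiag (i' : Fin 2) (hne : i' ≠ i) := not_mem_V_diag_of_ne hRW.ha hω hne
  have h01 := hoff 0 1 (by decide)
  have h10 := hoff 1 0 (by decide)
  fin_cases i
  · have h11 := hdiag 1 (by decide)
    simp only [Fin.zero_eta] at hω ⊢
    simp [h01, h10, h11, hω]
  · have h00 := hdiag 0 (by decide)
    simp only [Fin.mk_one] at hω ⊢
    simp [h01, h10, h00, hω]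

lemma IsRWG.map_succ (hRW : IsRWG P a h 0 α q S F) {n : ℕ} {i : Fin 2}
    (hV : ∀ᵐ ω ∂P, S n ω ∈ V a h i i) :
    P.map (S (n + 1)) =
      ∑ k, ENNReal.ofReal (q i i k) • P.map (fun ω => S n ω + w a i k) := by
  have := hRW.prob
  have hm (k : Fin 3) : Measurable fun ω => S n ω + w a i k := (hRW.hSmeas n).add_const _
  ext A hA
  have h1 := hRW.integral_succ hV (f := A.indicator fun _ => 1) (measurable_const.indicator hA)
    ⟨1, fun x => by by_cases hx : x ∈ A <;> simp [hx]⟩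
  have h2 (X : Ω → E) (hX : Measurable X) :
      ∫ ω, A.indicator (fun _ => (1 : ℝ)) (X ω) ∂P = P.real (X ⁻¹' A) := by
    have : (fun ω => A.indicator (fun _ => (1 : ℝ)) (X ω)) = (X ⁻¹' A).indicator 1 := by
      ext ω; by_cases hx : X ω ∈ A <;> simp [hx]
    rw [this, integral_indicator_one (hX hA)]
  rw [h2 _ (hRW.hSmeas _)] at h1
  simp_rw [fun k => h2 _ (hm k)] at h1
  rw [Measure.map_apply (hRW.hSmeas _) hA, ← ofReal_measureReal, h1,
    ENNReal.ofReal_sum_of_nonneg fun k _ => mul_nonneg (hRW.hq i i k) measureReal_nonneg]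
  simp only [Measure.coe_finsetSum, Finset.sum_apply, Measure.smul_apply, smul_eq_mul]
  refine Finset.sum_congr rfl fun k _ => ?_
  rw [ENNReal.ofReal_mul (hRW.hq i i k), ofReal_measureReal, Measure.map_apply (hm k) hA]

lemma IsRWG.lintegral_succ (hRW : IsRWG P a h 0 α q S F) {n : ℕ} {i : Fin 2}
    (hV : ∀ᵐ ω ∂P, S n ω ∈ V a h i i) {f : E → ENNReal} (hf : Measurable f) :
    ∫⁻ ω, f (S (n + 1) ω) ∂P =
      ∑ k, ENNReal.ofReal (q i i k) * ∫⁻ ω, f (S n ω + w a i k) ∂P := by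
  rw [← lintegral_map hf (hRW.hSmeas _), hRW.map_succ hV, lintegral_finsetSum_measure]
  refine Finset.sum_congr rfl fun k _ => ?_
  rw [lintegral_smul_measure, lintegral_map hf ((hRW.hSmeas n).add_const _), smul_eq_mul]

lemma IsRWG.ae_mem_V (hRW : IsRWG P a h 0 α q S F) (n : ℕ) :
    ∀ᵐ ω ∂P, S n ω ∈ V a h (parity n) (parity n) := by
  induction n with
  | zero =>
    refine ae_of_all _ fun ω => ⟨0, 0, 0, ?_⟩
    rw [hRW.hS0]
    ext r; fin_cases r <;> simp [vec, parity]
  | succ n ih =>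
    have hA := measurableSet_V a h (parity (n + 1)) (parity (n + 1))
    have h0 := hRW.lintegral_succ ih (f := (V a h _ _)ᶜ.indicator 1)
      (measurable_one.indicator hA.compl)
    have h1 (k : Fin 3) : ∫⁻ ω, (V a h (parity (n + 1)) (parity (n + 1)))ᶜ.indicator 1
        (S n ω + w a (parity n) k) ∂P = 0 := by
      rw [lintegral_congr_ae (g := 0), Pi.zero_def, lintegral_zero]
      filter_upwards [ih] with ω hω
      have := add_w_mem_V hω k
      simp [parity, this]
    simp only [h1, mul_zero, Finset.sum_const_zero] at h0
    have h2 := (lintegral_eq_zero_iff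
      ((measurable_one.indicator hA.compl).comp (hRW.hSmeas (n + 1)))).1 h0
    filter_upwards [h2] with ω hω
    by_contra hc
    simp [hc] at hω

/-- The deterministic centring `E[S n]` of the walk when `p = 0`. -/
def center (a : ℝ) (q : Fin 2 → Fin 2 → Fin 3 → ℝ) (n : ℕ) : E :=
  ∑ j ∈ Finset.range n, meanStep a q (parity j)

lemma IsRWG.abs_meanStep_le (hRW : IsRWG P a h 0 α q S F) (i : Fin 2) (r : Fin 3) :
    |meanStep a q i r| ≤ a := by
  simpa [meanStep] using abs_sum_mul_le (hRW.hq i i) (hRW.sum_q i)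
    (fun k => abs_w_le hRW.ha i k r)

lemma IsRWG.sum_mul_exp_step_le (hRW : IsRWG P a h 0 α q S F) (i : Fin 2) (r : Fin 3) (t : ℝ) :
    ∑ k, q i i k * Real.exp (t * (w a i k r - meanStep a q i r)) ≤
      Real.exp (t ^ 2 * (2 * a) ^ 2 / 2) := by
  refine sum_mul_exp_le (by linarith [hRW.ha]) (hRW.hq i i) (hRW.sum_q i) ?_ (fun k => ?_) t
  · simp_rw [mul_sub]
    rw [Finset.sum_sub_distrib, ← Finset.sum_mul, hRW.sum_q]
    simp [meanStep]
  · calc |w a i k r - meanStep a q i r| ≤ |w a i k r| + |meanStep a q i r| := abs_sub _ _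
      _ ≤ 2 * a := by linarith [abs_w_le hRW.ha i k r, hRW.abs_meanStep_le i r]

/-- Sub-Gaussian bound for the coordinates of the centred walk. -/
lemma IsRWG.lintegral_exp_le (hRW : IsRWG P a h 0 α q S F) (r : Fin 3) (t : ℝ) (n : ℕ) :
    ∫⁻ ω, ENNReal.ofReal (Real.exp (t * (S n ω r - center a q n r))) ∂P ≤
      ENNReal.ofReal (Real.exp (n * (t ^ 2 * (2 * a) ^ 2 / 2))) := by
  have := hRW.prob
  induction n with
  | zero => simp [hRW.hS0, center]
  | succ n ih =>
    have hmeas : Measurable fun x : E =>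
        ENNReal.ofReal (Real.exp (t * (x r - center a q (n + 1) r))) := by fun_prop
    rw [hRW.lintegral_succ (hRW.ae_mem_V n) hmeas]
    have hc : center a q (n + 1) r = center a q n r + meanStep a q (parity n) r := by
      simp [center, Finset.sum_range_succ]
    have hfac (k : Fin 3) (ω : Ω) :
        ENNReal.ofReal (Real.exp (t * ((S n ω + w a (parity n) k) r - center a q (n + 1) r))) =
        ENNReal.ofReal (Real.exp (t * (w a (parity n) k r - meanStep a q (parity n) r))) *
          ENNReal.ofReal (Real.exp (t * (S n ω r - center a q n r))) := by
      rw [← ENNReal.ofReal_mul (Real.exp_nonneg _), ← Real.exp_add, hc, PiLp.add_apply]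
      ring_nf
    simp_rw [hfac]
    have hq := hRW.hq (parity n) (parity n)
    simp_rw [lintegral_const_mul' _ _ ENNReal.ofReal_ne_top, ← mul_assoc]
    rw [← Finset.sum_mul]
    simp_rw [fun k => (ENNReal.ofReal_mul (q := Real.exp (t * (w a (parity n) k r -
      meanStep a q (parity n) r))) (hq k)).symm]
    rw [← ENNReal.ofReal_sum_of_nonneg fun k _ => mul_nonneg (hq k) (Real.exp_nonneg _)]
    calc _ ≤ ENNReal.ofReal (Real.exp (t ^ 2 * (2 * a) ^ 2 / 2)) *
          ENNReal.ofReal (Real.exp (n * (t ^ 2 * (2 * a) ^ 2 / 2))) :=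
          mul_le_mul' (ENNReal.ofReal_le_ofReal (hRW.sum_mul_exp_step_le _ r t)) ih
      _ = _ := by
          rw [← ENNReal.ofReal_mul (Real.exp_nonneg _), ← Real.exp_add]
          push_cast
          ring_nf

/-- One-sided almost sure bound, for the coordinate `r` with sign `s`. -/
lemma IsRWG.ae_eventually_mul_sub_lt (hRW : IsRWG P a h 0 α q S F) (r : Fin 3) {s : ℝ}
    (hs : s ^ 2 = 1) :
    ∀ᵐ ω ∂P, ∀ᶠ n : ℕ in atTop,
      s * (S n ω r - center a q n r) < 4 * a * √(n * Real.log n) := by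
  have ha := hRW.ha
  let t (n : ℕ) : ℝ := √(Real.log n / n) / a
  let A (n : ℕ) : Set Ω := {ω | ENNReal.ofReal (Real.exp (4 * Real.log n)) ≤
    ENNReal.ofReal (Real.exp (s * t n * (S n ω r - center a q n r)))}
  have hlog (n : ℕ) : 0 ≤ Real.log n := Real.log_natCast_nonneg n
  have hA (n : ℕ) : P (A n) ≤ ENNReal.ofReal (Real.exp (-2 * Real.log n)) := by
    have hm : Measurable fun ω => ENNReal.ofReal
        (Real.exp (s * t n * (S n ω r - center a q n r))) := by
      have := hRW.hSmeas n
      fun_prop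
    refine (meas_ge_le_lintegral_div hm.aemeasurable
      (ENNReal.ofReal_pos.2 (Real.exp_pos _)).ne' ENNReal.ofReal_ne_top).trans ?_
    refine (ENNReal.div_le_div_right (hRW.lintegral_exp_le r (s * t n) n) _).trans ?_
    rw [← ENNReal.ofReal_div_of_pos (Real.exp_pos _), ← Real.exp_sub]
    refine ENNReal.ofReal_le_ofReal (Real.exp_le_exp.2 ?_)
    rcases Nat.eq_zero_or_pos n with rfl | hn
    · simp
    have hn' : (0 : ℝ) < n := by exact_mod_cast hn
    have : (n : ℝ) * ((s * t n) ^ 2 * (2 * a) ^ 2 / 2) = 2 * Real.log n := by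
      simp only [t]
      rw [mul_pow, hs, div_pow, Real.sq_sqrt (div_nonneg (hlog n) hn'.le)]
      field_simp
    linarith
  have hsum : ∑' n, P (A n) ≠ ⊤ := by
    have h2 : Summable fun n : ℕ => Real.exp (-2 * Real.log n) := by
      refine (summable_nat_add_iff 1).1 ?_
      refine ((summable_nat_add_iff 1).2 (Real.summable_nat_pow_inv.2 one_lt_two)).congr
        fun n => ?_
      rw [neg_mul, Real.exp_neg, two_mul, Real.exp_add,
        Real.exp_log (by positivity), sq]
    exact ne_top_of_le_ne_top h2.tsum_ofReal_ne_top (ENNReal.tsum_le_tsum hA)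
  filter_upwards [ae_eventually_notMem hsum] with ω hω
  filter_upwards [hω, eventually_ge_atTop 2] with n hn hn2
  have hn' : (0 : ℝ) < n := by positivity
  have hl : 0 < Real.log n := Real.log_pos (by exact_mod_cast hn2)
  have ht : 0 < t n := by positivity
  simp only [A, Set.mem_ofPred_eq, not_le, ENNReal.ofReal_lt_ofReal_iff (Real.exp_pos _),
    Real.exp_lt_exp] at hn
  have key : t n * (4 * a * √(n * Real.log n)) = 4 * Real.log n := by
    simp only [t]
    have : √(Real.log n / n) * √(n * Real.log n) = Real.log n := by
      rw [← Real.sqrt_mul (by positivity), show Real.log n / n * (n * Real.log n) =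
        Real.log n * Real.log n by field_simp, Real.sqrt_mul_self hl.le]
    calc _ = 4 * (√(Real.log n / n) * √(n * Real.log n)) := by field_simp
      _ = _ := by rw [this]
  refine lt_of_mul_lt_mul_left ?_ ht.le
  rw [key]
  linarith

lemma IsRWG.abs_center_sub_le (hRW : IsRWG P a h 0 α q S F) (n : ℕ) (r : Fin 3) :
    |center a q n r - n * (muG a h 0 α q + rhoG a 0 q) r| ≤ a := by
  have hM := congrArg (fun v : E => v r) (meanStep_add_meanStep a h α hRW.sum_q)
  simp only [PiLp.add_apply, PiLp.smul_apply, smul_eq_mul] at hM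
  have hstep (m : ℕ) : center a q (m + 1) r = center a q m r + meanStep a q (parity m) r := by
    simp [center, Finset.sum_range_succ]
  have heven (m : ℕ) :
      center a q (m + m) r = (m + m : ℕ) * (muG a h 0 α q + rhoG a 0 q) r := by
    induction m with
    | zero => simp [center]
    | succ m ih =>
      have h0 : parity (m + m) = 0 := parity_add_self m
      have h1 : parity (m + m + 1) = 1 := by
        rw [parity, h0]; rfl
      rw [show m + 1 + (m + 1) = m + m + 1 + 1 by ring, hstep, hstep, ih, h0, h1]
      push_cast
      simp only [PiLp.add_apply]
      linear_combination hM
  rcases Nat.even_or_odd' n with ⟨m, rfl | rfl⟩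
  · rw [two_mul, heven, sub_self, abs_zero]
    exact hRW.ha.le
  · have h0 : parity (m + m) = 0 := parity_add_self m
    rw [two_mul, hstep, heven, h0]
    have e0 := abs_le.1 (hRW.abs_meanStep_le 0 r)
    have e1 := abs_le.1 (hRW.abs_meanStep_le 1 r)
    push_cast
    simp only [PiLp.add_apply]
    rw [abs_le]
    constructor <;> linarith

lemma IsRWG.ae_rate (hRW : IsRWG P a h 0 α q S F) :
    ∀ᵐ ω ∂P, ∀ᶠ n : ℕ in atTop,
      ‖(n : ℝ)⁻¹ • S n ω - (muG a h 0 α q + rhoG a 0 q)‖ ^ 2 ≤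
        75 * a ^ 2 * Real.log n / n := by
  have ha := hRW.ha
  have hup := ae_all_iff.2 fun r => hRW.ae_eventually_mul_sub_lt r (s := 1) (by norm_num)
  have hlo := ae_all_iff.2 fun r => hRW.ae_eventually_mul_sub_lt r (s := -1) (by norm_num)
  filter_upwards [hup, hlo] with ω hu hl
  filter_upwards [eventually_all.2 hu, eventually_all.2 hl, eventually_ge_atTop 3]
    with n hun hln hn
  have hn3 : (3 : ℝ) ≤ n := by exact_mod_cast hn
  have hn0 : (0 : ℝ) < n := by linarith
  have hlog : 1 ≤ Real.log n := by
    rw [Real.le_log_iff_exp_le hn0]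
    linarith [Real.exp_one_lt_d9]
  set R := √(n * Real.log n) with hR
  have hR1 : 1 ≤ R := Real.one_le_sqrt.2 (by nlinarith)
  have hR2 : R ^ 2 = n * Real.log n := Real.sq_sqrt (by positivity)
  have hcoord (r : Fin 3) :
      ‖((n : ℝ)⁻¹ • S n ω - (muG a h 0 α q + rhoG a 0 q)) r‖ ^ 2 ≤
        25 * a ^ 2 * Real.log n / n := by
    set M := muG a h 0 α q + rhoG a 0 q with hM
    have h1 : |S n ω r - n * M r| ≤ 5 * a * R := by
      have hc := abs_le.1 (hRW.abs_center_sub_le n r)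
      have h2 := hun r
      have h3 := hln r
      have h4 : a ≤ a * R := le_mul_of_one_le_right ha.le hR1
      rw [← hM] at hc
      rw [abs_le]
      constructor <;> linarith
    have h2 : ((n : ℝ)⁻¹ • S n ω - M) r = (S n ω r - n * M r) / n := by
      simp only [PiLp.sub_apply, PiLp.smul_apply, smul_eq_mul]
      field_simp
    rw [h2, Real.norm_eq_abs, sq_abs, div_pow]
    have h3 : (S n ω r - n * M r) ^ 2 ≤ (5 * a * R) ^ 2 := sq_le_sq' (abs_le.1 h1).1 (abs_le.1 h1).2
    rw [div_le_div_iff₀ (by positivity) hn0]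
    calc (S n ω r - n * M r) ^ 2 * n ≤ (5 * a * R) ^ 2 * n := by gcongr
      _ = 25 * a ^ 2 * Real.log n * n ^ 2 := by rw [mul_pow, hR2]; ring
  rw [EuclideanSpace.norm_sq_eq]
  refine (Finset.sum_le_sum fun r _ => hcoord r).trans_eq ?_
  rw [Finset.sum_const, Finset.card_univ, Fintype.card_fin]
  simp only [nsmul_eq_mul]
  push_cast
  ring

end Walk

end RWG

theorem rwg_slln_p_zero {Ω : Type} [MeasurableSpace Ω] (P : Measure Ω)
    (a h p α : ℝ) (q : Fin 2 → Fin 2 → Fin 3 → ℝ)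
    (S : ℕ → Ω → RWG.E) (F : ℕ → MeasurableSpace Ω)
    (hRW : RWG.IsRWG P a h p α q S F) (hp : p = 0) :
    (∀ᵐ ω ∂P, Tendsto (fun n : ℕ => (n : ℝ)⁻¹ • S n ω) atTop
      (nhds (RWG.muG a h p α q + RWG.rhoG a p q))) ∧
    (∀ᵐ ω ∂P, ∃ C > (0 : ℝ), ∃ N : ℕ, ∀ n ≥ N,
      ‖(n : ℝ)⁻¹ • S n ω - RWG.muG a h p α q - RWG.rhoG a p q‖ ^ 2 ≤
        C * Real.log n / n) := by
  subst hp
  have hrate := hRW.ae_rate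
  constructor
  · filter_upwards [hrate] with ω hω
    rw [tendsto_iff_norm_sub_tendsto_zero]
    have hlim : Tendsto (fun n : ℕ => 75 * a ^ 2 * Real.log n / n) atTop (nhds 0) := by
      have h1 := (Real.isLittleO_log_id_atTop.tendsto_div_nhds_zero.comp
        tendsto_natCast_atTop_atTop).const_mul (75 * a ^ 2)
      rw [mul_zero] at h1
      exact h1.congr fun n => by simp [mul_div_assoc]
    have hsq := squeeze_zero' (Eventually.of_forall fun n => sq_nonneg _) hω hlim
    simpa using hsq.sqrt
  · filter_upwards [hrate] with ω hω
    obtain ⟨N, hN⟩ := eventually_atTop.1 hω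
    have ha := hRW.ha
    refine ⟨75 * a ^ 2, by positivity, N, fun n hn => ?_⟩
    rw [sub_sub]
    exact hN n hn
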